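/- Let E be a real vector space, J a finite index set, u_i ∈ E, and for each j ∈ J let u_j, F_j ∈ E; let F_i ∈ E. Let c_j (j ∈ J) and c_self be real numbers with c_self + ∑_{j∈J} c_j = 0, let d_j > 0 for j ∈ J, and let m > 0, Δt > 0. Define the bar states ū_j = (u_i + u_j)/2 + (c_j/(2 d_j))·(F_j − F_i). Then the forward Euler update admits the convex-combination form: u_i + (Δt/m)·( ∑_{j∈J} c_j • F_j + c_self • F_i + ∑_{j∈J} d_j • (u_j − u_i) ) = (1 − ∑_{j∈J} 2Δt d_j/m)·u_i + ∑_{j∈J} (2Δt d_j/m)·ū_j. -/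

import Mathlib

section ConvexCombination

variable {R M ι : Type*} [Ring R] [AddCommGroup M] [Module R M] (s : Finset ι)

theorem sum_smul_sub_of_add_sum_eq_zero {a : R} {c : ι → R} (hc : a + ∑ j ∈ s, c j = 0)
    (f : ι → M) (x : M) :
    ∑ j ∈ s, c j • (f j - x) = ∑ j ∈ s, c j • f j + a • x := by
  rw [eq_neg_of_add_eq_zero_left hc, neg_smul, ← sub_eq_add_neg, Finset.sum_smul,
    ← Finset.sum_sub_distrib]
  simp only [smul_sub]

theorem add_sum_smul_sub_eq_one_sub_sum_smul_add (w : ι → R) (x : M) (y : ι → M) :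
    x + ∑ j ∈ s, w j • (y j - x) = (1 - ∑ j ∈ s, w j) • x + ∑ j ∈ s, w j • y j := by
  simp only [smul_sub, Finset.sum_sub_distrib, ← Finset.sum_smul, sub_smul, one_smul]
  abel

end ConvexCombination

section GraphViscosity

variable {K E : Type*} [Field K] [AddCommGroup E] [Module K E]

/-- The bar state `ū_ij` of the graph-viscosity method, for a pair of nodes with states `ui`, `uj`,
fluxes `Fi`, `Fj`, stencil coefficient `c = ĉ_ij` and viscosity `d = d̂_ij`. It is meaningful only
for `2 * d ≠ 0`. -/
def barState (c d : K) (ui uj Fi Fj : E) : E :=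
  (1 / 2 : K) • (ui + uj) + (c / (2 * d)) • (Fj - Fi)

variable [NeZero (2 : K)]

theorem two_mul_smul_barState_sub (c : K) {d : K} (hd : d ≠ 0) (ui uj Fi Fj : E) :
    (2 * d) • (barState c d ui uj Fi Fj - ui) = c • (Fj - Fi) + d • (uj - ui) := by
  have two_ne_zero : (2 : K) ≠ 0 := NeZero.ne 2
  have half_weight : 2 * d * (1 / 2) = d := by field_simp
  have flux_weight : 2 * d * (c / (2 * d)) = c := by field_simp
  rw [barState, smul_sub, smul_add, smul_smul, smul_smul, half_weight, flux_weight]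
  module

/-- `τ` is the ratio `Δt / m` of the time step to the lumped mass. -/
theorem forward_euler_eq_convex_combination_general {ι : Type*} (J : Finset ι) (ui : E)
    (u F : ι → E) (Fi : E) (c : ι → K) (cself : K) (hc : cself + ∑ j ∈ J, c j = 0)
    (d : ι → K) (hd : ∀ j ∈ J, d j ≠ 0) (τ : K) :
    ui + τ • (∑ j ∈ J, c j • F j + cself • Fi + ∑ j ∈ J, d j • (u j - ui))
      = (1 - ∑ j ∈ J, 2 * τ * d j) • ui
        + ∑ j ∈ J, (2 * τ * d j) • barState (c j) (d j) ui (u j) Fi (F j) := by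
  have increment : ∀ j ∈ J, τ • (c j • (F j - Fi) + d j • (u j - ui)) =
      (2 * τ * d j) • (barState (c j) (d j) ui (u j) Fi (F j) - ui) := fun j hj => by
    rw [← two_mul_smul_barState_sub (c j) (hd j hj), smul_smul, mul_left_comm, mul_assoc]
  calc
    _ = ui + ∑ j ∈ J, τ • (c j • (F j - Fi) + d j • (u j - ui)) := by
      rw [← sum_smul_sub_of_add_sum_eq_zero J hc, ← Finset.sum_add_distrib, Finset.smul_sum]
    _ = ui + ∑ j ∈ J, (2 * τ * d j) • (barState (c j) (d j) ui (u j) Fi (F j) - ui) := by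
      rw [Finset.sum_congr rfl increment]
    _ = _ := add_sum_smul_sub_eq_one_sub_sum_smul_add J _ ui _

end GraphViscosity

/-- Rewriting of the low-order graph-viscosity forward Euler update as a convex
combination of the previous nodal value and the bar states
`ū_j = (u_i + u_j)/2 + (c_j/(2 d_j)) • (F_j - F_i)`. -/
theorem forward_euler_eq_convex_combination {E : Type*} [AddCommGroup E] [Module ℝ E]
    {ι : Type*} (J : Finset ι) (ui : E) (u F : ι → E) (Fi : E)
    (c : ι → ℝ) (cself : ℝ) (hc : cself + ∑ j ∈ J, c j = 0)
    (d : ι → ℝ) (hd : ∀ j ∈ J, 0 < d j)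
    (m Δt : ℝ) (hm : 0 < m) (hΔt : 0 < Δt) :
    ui + (Δt / m) • (∑ j ∈ J, c j • F j + cself • Fi + ∑ j ∈ J, d j • (u j - ui))
      = (1 - ∑ j ∈ J, 2 * Δt * d j / m) • ui
        + ∑ j ∈ J, (2 * Δt * d j / m) •
            ((1 / 2 : ℝ) • (ui + u j) + (c j / (2 * d j)) • (F j - Fi)) := by
  simp only [mul_div_right_comm _ (d _), mul_div_assoc 2 Δt]
  exact forward_euler_eq_convex_combination_general J ui u F Fi c cself hc d
    (fun j hj => (hd j hj).ne') (Δt / m)
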